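/- With bounded rate kernel λ, for each y ∈ O and initial condition ρ ∈ Δ_y, the ODE dz/dt = F_y(z(t)), z(0) = ρ, admits a unique global solution z ∈ C¹([0, ∞); Δ_y); in particular z(t) remains a probability measure concentrated on h⁻¹(y) for all t ≥ 0. -/

import Mathlib

open MeasureTheory Filter

/-- The total variation norm of a finite signed measure. -/
noncomputable def tvNorm {I : Type*} [MeasurableSpace I] (μ : SignedMeasure I) : ℝ :=
  (μ.totalVariation Set.univ).toReal

/-- Integral of a function against a finite signed measure (via the Jordan decomposition). -/
noncomputable def sInt {I : Type*} [MeasurableSpace I] (ξ : SignedMeasure I) (f : I → ℝ) : ℝ :=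
  (∫ x, f x ∂ξ.toJordanDecomposition.posPart) - ∫ x, f x ∂ξ.toJordanDecomposition.negPart

/-- The vector field `F_y(ν) := B_y ν − ν · (B_y ν)(I)`. -/
noncomputable def Fy {I : Type*} [MeasurableSpace I]
    (B : SignedMeasure I → SignedMeasure I) (ξ : SignedMeasure I) : SignedMeasure I :=
  B ξ - ((B ξ) Set.univ) • ξ

/-- `Δ_y`: probability measures concentrated on `h⁻¹(y)`. -/
def DeltaY {I O : Type*} [MeasurableSpace I] (h : I → O) (y : O) : Set (SignedMeasure I) :=
  {ξ | (∀ A : Set I, MeasurableSet A → 0 ≤ ξ A) ∧ ξ Set.univ = 1 ∧ ξ ((h ⁻¹' {y})ᶜ) = 0}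

/-- `z` has derivative `F_y(z(t))` at `t` from within `[0, ∞)`, in the total variation
norm. -/
def HasTVDerivAt {I : Type*} [MeasurableSpace I]
    (B : SignedMeasure I → SignedMeasure I) (z : ℝ → SignedMeasure I) (t : ℝ) : Prop :=
  Tendsto (fun s => tvNorm (z s - z t - (s - t) • Fy B (z t)) / |s - t|)
    (nhdsWithin t (Set.Ici 0 \ {t})) (nhds 0)

/-!
The field `F_y` is the projectivisation of the linear field `B_y`. Since the rates are bounded by
some `M`, the operator `T = B_y + M` maps the cone of positive measures on `h⁻¹(y)` to itself,
hence so does `exp(tT) = 1 + tT + ⋯` for `t ≥ 0`; moreover `exp(tT) ρ ≥ ρ`, so the mass of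
`exp(tT) ρ` never vanishes. Dividing `exp(tT) ρ` by its mass gives a solution: the shift by `M`
multiplies the linear flow by `exp(Mt)`, which the normalisation undoes. Uniqueness holds because
`F_y` is quadratic, hence locally Lipschitz, for the total variation norm, which makes the signed
measures a Banach space.
-/

section NormalizedFlow

variable {E : Type*} [NormedAddCommGroup E] [NormedSpace ℝ E]

theorem eqOn_Ici_of_hasDerivWithinAt_of_locallyLipschitz {f : E → E} (hf : LocallyLipschitz f)
    {z w : ℝ → E} {a : ℝ} (hz : ∀ t, a ≤ t → HasDerivWithinAt z (f (z t)) (Set.Ici a) t)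
    (hw : ∀ t, a ≤ t → HasDerivWithinAt w (f (w t)) (Set.Ici a) t) (hzw : z a = w a) :
    Set.EqOn z w (Set.Ici a) := by
  intro b hb
  have continuousOn {u : ℝ → E} (hu : ∀ t, a ≤ t → HasDerivWithinAt u (f (u t)) (Set.Ici a) t) :
      ContinuousOn u (Set.Icc a b) := fun t ht =>
    (hu t ht.1).continuousWithinAt.mono Set.Icc_subset_Ici_self
  have hasDeriv {u : ℝ → E} (hu : ∀ t, a ≤ t → HasDerivWithinAt u (f (u t)) (Set.Ici a) t) :
      ∀ t ∈ Set.Ico a b, HasDerivWithinAt u (f (u t)) (Set.Ici t) t := fun t ht =>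
    (hu t ht.1).mono (Set.Ici_subset_Ici.2 ht.1)
  -- Both solutions sweep out compact sets over `[a, b]`, on which `f` is Lipschitz.
  obtain ⟨K, hK⟩ := (hf.locallyLipschitzOn (s := z '' Set.Icc a b ∪ w '' Set.Icc a b))
    |>.exists_lipschitzOnWith_of_compact <|
      (isCompact_Icc.image_of_continuousOn (continuousOn hz)).union
        (isCompact_Icc.image_of_continuousOn (continuousOn hw))
  exact ODE_solution_unique_of_mem_Icc_right (v := fun _ => f) (fun _ _ => hK)
    (continuousOn hz) (hasDeriv hz)
    (fun t ht => .inl (Set.mem_image_of_mem z (Set.Ico_subset_Icc_self ht)))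
    (continuousOn hw) (hasDeriv hw)
    (fun t ht => .inr (Set.mem_image_of_mem w (Set.Ico_subset_Icc_self ht)))
    hzw (Set.right_mem_Icc.2 hb)

/-- The quadratic vector field `x ↦ L x - φ (L x) x`, tangent to the hyperplane `φ = 1`, to which
the linear field `L` descends under the projection `x ↦ x / φ x`. -/
def normalizedField (φ : E →L[ℝ] ℝ) (L : E →L[ℝ] E) (x : E) : E :=
  L x - φ (L x) • x

theorem contDiff_normalizedField (φ : E →L[ℝ] ℝ) (L : E →L[ℝ] E) {n : WithTop ℕ∞} :
    ContDiff ℝ n (normalizedField φ L) := by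
  unfold normalizedField
  fun_prop

theorem normalizedField_add_smul_id {φ : E →L[ℝ] ℝ} {x : E} (hx : φ x = 1) (L : E →L[ℝ] E)
    (c : ℝ) : normalizedField φ (L + c • .id ℝ E) x = normalizedField φ L x := by
  simp [normalizedField, hx, add_smul]

/-- The curve `exp(tL) x`, rescaled to lie in the hyperplane `φ = 1`. It takes the junk value `0`
when `φ (exp(tL) x) = 0`. -/
noncomputable def normalizedFlow (φ : E →L[ℝ] ℝ) (L : E →L[ℝ] E) (x : E) (t : ℝ) : E :=
  (φ (NormedSpace.exp (t • L) x))⁻¹ • NormedSpace.exp (t • L) x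

theorem normalizedFlow_zero {φ : E →L[ℝ] ℝ} {x : E} (hx : φ x = 1) (L : E →L[ℝ] E) :
    normalizedFlow φ L x 0 = x := by
  simp [normalizedFlow, hx]

variable [CompleteSpace E]

theorem exp_smul_apply_sub_mem {K : ProperCone ℝ E} {L : E →L[ℝ] E}
    (hL : ∀ x ∈ K, L x ∈ K) {x : E} (hx : x ∈ K) {t : ℝ} (ht : 0 ≤ t) :
    NormedSpace.exp (t • L) x - x ∈ K := by
  have pow_mem (n : ℕ) : ((t • L) ^ n) x ∈ K := by
    induction n with
    | zero => simpa using hx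
    | succ n ih => simpa [pow_succ'] using K.smul_mem (hL _ ih) ht
  have series : HasSum (fun n : ℕ => (n.factorial : ℝ)⁻¹ • ((t • L) ^ n) x)
      (NormedSpace.exp (t • L) x) := by
    have exp_series := NormedSpace.exp_series_hasSum_exp' (𝕂 := ℝ) (t • L)
    exact exp_series.mapL (ContinuousLinearMap.apply ℝ E x)
  have tail : HasSum (fun n : ℕ => ((n + 1).factorial : ℝ)⁻¹ • ((t • L) ^ (n + 1)) x)
      (NormedSpace.exp (t • L) x - x) := by
    simpa using (hasSum_nat_add_iff' 1).2 series
  exact K.isClosed.mem_of_tendsto tail <| .of_forall fun s =>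
    sum_mem fun n _ => K.smul_mem (pow_mem (n + 1)) (by positivity)

theorem hasDerivAt_normalizedFlow {φ : E →L[ℝ] ℝ} {L : E →L[ℝ] E} {x : E} {t : ℝ}
    (hφ : φ (NormedSpace.exp (t • L) x) ≠ 0) :
    HasDerivAt (normalizedFlow φ L x) (normalizedField φ L (normalizedFlow φ L x t)) t := by
  have flow : HasDerivAt (fun s : ℝ => NormedSpace.exp (s • L) x)
      (L (NormedSpace.exp (t • L) x)) t :=
    (ContinuousLinearMap.apply ℝ E x).hasFDerivAt.comp_hasDerivAt t (hasDerivAt_exp_smul_const' L t)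
  have mass : HasDerivAt (fun s : ℝ => φ (NormedSpace.exp (s • L) x))
      (φ (L (NormedSpace.exp (t • L) x))) t :=
    φ.hasFDerivAt.comp_hasDerivAt t flow
  refine ((mass.inv hφ).smul flow).congr_deriv ?_
  simp only [normalizedField, normalizedFlow, map_smul, Pi.inv_apply, smul_eq_mul]
  match_scalars <;> field_simp

theorem exists_solution_normalizedField_mem_cone {φ : E →L[ℝ] ℝ} {L : E →L[ℝ] E}
    {K : ProperCone ℝ E} (hφ : ∀ x ∈ K, 0 ≤ φ x) {c : ℝ} (hL : ∀ x ∈ K, L x + c • x ∈ K)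
    {x : E} (hx : x ∈ K) (hφx : φ x = 1) :
    ∃ z : ℝ → E, z 0 = x ∧ ∀ t, 0 ≤ t →
      z t ∈ K ∧ φ (z t) = 1 ∧ HasDerivAt z (normalizedField φ L (z t)) t := by
  set T := L + c • .id ℝ E
  refine ⟨normalizedFlow φ T x, normalizedFlow_zero hφx T, fun t ht => ?_⟩
  have increment_mem : NormedSpace.exp (t • T) x - x ∈ K := exp_smul_apply_sub_mem hL hx ht
  have flow_mem : NormedSpace.exp (t • T) x ∈ K := by
    simpa using add_mem increment_mem hx
  have mass_pos : 0 < φ (NormedSpace.exp (t • T) x) := by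
    have := hφ _ increment_mem
    rw [map_sub, hφx] at this
    linarith
  have mass_one : φ (normalizedFlow φ T x t) = 1 := by
    simp [normalizedFlow, mass_pos.ne']
  refine ⟨K.smul_mem flow_mem (inv_nonneg.2 mass_pos.le), mass_one, ?_⟩
  rw [← normalizedField_add_smul_id mass_one L c]
  exact hasDerivAt_normalizedFlow mass_pos.ne'

end NormalizedFlow

section TotalVariationNorm

variable {I : Type*} [MeasurableSpace I]

instance (ξ : SignedMeasure I) : IsFiniteMeasure ξ.variation :=
  ξ.totalVariation_eq_variation ▸ inferInstanceAs (IsFiniteMeasure ξ.totalVariation)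

theorem tvNorm_eq_variation_real (ξ : SignedMeasure I) : tvNorm ξ = ξ.variation.real Set.univ :=
  congrArg (fun m : Measure I => m.real Set.univ) ξ.totalVariation_eq_variation

theorem tvNorm_le_of_forall_abs_apply_le {ξ : SignedMeasure I} {m : Measure I} [IsFiniteMeasure m]
    (hξ : ∀ A, MeasurableSet A → |ξ A| ≤ m.real A) : tvNorm ξ ≤ m.real Set.univ := by
  rw [tvNorm_eq_variation_real]
  refine ENNReal.toReal_mono (measure_ne_top m _) ?_
  refine VectorMeasure.variation_le_of_forall_enorm_le (fun A hA => ?_) _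
  rw [← ofReal_norm, ← ofReal_measureReal]
  exact ENNReal.ofReal_le_ofReal (hξ A hA)

/-- The total variation norm; Mathlib puts no topology on `SignedMeasure I`. -/
noncomputable instance : Norm (SignedMeasure I) :=
  ⟨tvNorm⟩

theorem normedSpaceCore_signedMeasure : NormedSpace.Core ℝ (SignedMeasure I) where
  norm_nonneg _ := ENNReal.toReal_nonneg
  norm_smul c ξ := by
    change tvNorm (c • ξ) = ‖c‖ * tvNorm ξ
    simp [tvNorm_eq_variation_real, VectorMeasure.variation_smul]
  norm_triangle ξ η := by
    change tvNorm (ξ + η) ≤ tvNorm ξ + tvNorm η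
    simp only [tvNorm_eq_variation_real]
    rw [← measureReal_add_apply]
    exact ENNReal.toReal_mono (measure_ne_top _ _) (VectorMeasure.variation_add_le _)
  norm_eq_zero_iff ξ := by
    change tvNorm ξ = 0 ↔ ξ = 0
    rw [tvNorm_eq_variation_real, measureReal_eq_zero_iff, Measure.measure_univ_eq_zero,
      VectorMeasure.variation_eq_zero]

noncomputable instance : NormedAddCommGroup (SignedMeasure I) :=
  .ofCore normedSpaceCore_signedMeasure

noncomputable instance : NormedSpace ℝ (SignedMeasure I) :=
  .ofCore normedSpaceCore_signedMeasure

theorem hasTVDerivAt_iff_hasDerivWithinAt {B : SignedMeasure I → SignedMeasure I}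
    {z : ℝ → SignedMeasure I} {t : ℝ} :
    HasTVDerivAt B z t ↔ HasDerivWithinAt z (Fy B (z t)) (Set.Ici 0) t := by
  rw [← hasDerivWithinAt_sdiff_singleton, hasDerivWithinAt_iff_tendsto]
  simp only [HasTVDerivAt, div_eq_inv_mul]
  rfl

/-- Evaluation `ξ ↦ ξ A`, as a continuous linear functional. -/
noncomputable def evalCLM (A : Set I) : SignedMeasure I →L[ℝ] ℝ :=
  LinearMap.mkContinuous { toFun ξ := ξ A, map_add' _ _ := rfl, map_smul' _ _ := rfl } 1 fun ξ => by
    rw [one_mul]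
    exact (ξ.norm_le_totalVariation A).trans (measureReal_mono (Set.subset_univ A))

@[simp]
theorem evalCLM_apply (A : Set I) (ξ : SignedMeasure I) : evalCLM A ξ = ξ A :=
  rfl

end TotalVariationNorm

section Completeness

variable {I : Type*} [MeasurableSpace I]

theorem hasSum_measureReal_sum {ι : Type*} (μ : ι → Measure I) [IsFiniteMeasure (Measure.sum μ)]
    {A : Set I} (hA : MeasurableSet A) :
    HasSum (fun i => (μ i).real A) ((Measure.sum μ).real A) := by
  have finite : ∑' i, μ i A ≠ ⊤ := Measure.sum_apply μ hA ▸ measure_ne_top (Measure.sum μ) A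
  simpa only [Measure.real, Measure.sum_apply μ hA,
    ENNReal.tsum_toReal_eq (ENNReal.ne_top_of_tsum_ne_top finite)] using
    ENNReal.hasSum_toReal finite

variable {ι : Type*} {u : ι → SignedMeasure I}

theorem isFiniteMeasure_sum_totalVariation (hu : Summable fun i => ‖u i‖) :
    IsFiniteMeasure (Measure.sum fun i => (u i).totalVariation) := by
  refine ⟨?_⟩
  rw [Measure.sum_apply _ .univ]
  have (i : ι) : (u i).totalVariation Set.univ = ENNReal.ofReal ‖u i‖ :=
    (ENNReal.ofReal_toReal (measure_ne_top _ _)).symm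
  simpa only [this] using hu.tsum_ofReal_lt_top

theorem exists_forall_hasSum_apply (hu : Summable fun i => ‖u i‖) :
    ∃ ξ : SignedMeasure I, ∀ A, MeasurableSet A → HasSum (fun i => u i A) (ξ A) := by
  let pos (i : ι) : Measure I := (u i).toJordanDecomposition.posPart
  let neg (i : ι) : Measure I := (u i).toJordanDecomposition.negPart
  have := isFiniteMeasure_sum_totalVariation hu
  have totalVariation_eq :
      (Measure.sum fun i => (u i).totalVariation) = Measure.sum pos + Measure.sum neg :=
    (Measure.sum_add_sum pos neg).symm
  have : IsFiniteMeasure (Measure.sum pos) :=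
    isFiniteMeasure_of_le _ (totalVariation_eq ▸ Measure.le_add_right le_rfl)
  have : IsFiniteMeasure (Measure.sum neg) :=
    isFiniteMeasure_of_le _ (totalVariation_eq ▸ Measure.le_add_left le_rfl)
  refine ⟨(Measure.sum pos).toSignedMeasure - (Measure.sum neg).toSignedMeasure, fun A hA => ?_⟩
  rw [_root_.sub_apply, Measure.toSignedMeasure_apply_measurable hA,
    Measure.toSignedMeasure_apply_measurable hA]
  simp only [SignedMeasure.apply_eq_posPart_real_sub_negPart_real _ hA]
  exact (hasSum_measureReal_sum pos hA).sub (hasSum_measureReal_sum neg hA)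

theorem norm_le_tsum_of_forall_hasSum_apply (hu : Summable fun i => ‖u i‖) {ξ : SignedMeasure I}
    (hξ : ∀ A, MeasurableSet A → HasSum (fun i => u i A) (ξ A)) : ‖ξ‖ ≤ ∑' i, ‖u i‖ := by
  have := isFiniteMeasure_sum_totalVariation hu
  have dominates {A : Set I} (hA : MeasurableSet A) :=
    hasSum_measureReal_sum (fun i => (u i).totalVariation) hA
  calc ‖ξ‖ ≤ (Measure.sum fun i => (u i).totalVariation).real Set.univ :=
        tvNorm_le_of_forall_abs_apply_le fun A hA =>
          (hξ A hA).norm_le_of_bounded (dominates hA) fun i => (u i).norm_le_totalVariation A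
    _ = ∑' i, ‖u i‖ := (dominates .univ).tsum_eq.symm

instance : CompleteSpace (SignedMeasure I) := by
  refine NormedAddCommGroup.completeSpace_of_summable_imp_tendsto fun u hu => ?_
  obtain ⟨ξ, hξ⟩ := exists_forall_hasSum_apply hu
  refine ⟨ξ, tendsto_iff_norm_sub_tendsto_zero.2 <|
    squeeze_zero (fun _ => norm_nonneg _) (fun n => ?_) (tendsto_sum_nat_add fun n => ‖u n‖)⟩
  rw [norm_sub_rev]
  refine norm_le_tsum_of_forall_hasSum_apply ((summable_nat_add_iff n).2 hu) fun A hA => ?_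
  have apply_tail := (hasSum_nat_add_iff' n).2 (hξ A hA)
  simpa only [← evalCLM_apply, map_sub, map_sum] using apply_tail

theorem exists_continuousLinearMap_of_forall_apply {E : Type*} [NormedAddCommGroup E]
    [NormedSpace ℝ E] [CompleteSpace E] {B : E → SignedMeasure I}
    (hB : ∀ A, MeasurableSet A → ∃ ℓ : E →L[ℝ] ℝ, ∀ x, B x A = ℓ x) :
    ∃ L : E →L[ℝ] SignedMeasure I, ⇑L = B := by
  choose! ℓ hℓ using hB
  let g : E →ₗ[ℝ] SignedMeasure I :=
    { toFun := B
      map_add' x x' := by ext A hA; simp [hℓ A hA]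
      map_smul' c x := by ext A hA; simp [hℓ A hA] }
  refine ⟨⟨g, g.continuous_of_seq_closed_graph fun u x ξ hu hBu => ?_⟩, rfl⟩
  ext A hA
  have image_apply : Tendsto (fun n => B (u n) A) atTop (nhds (ξ A)) :=
    ((evalCLM A).continuous.tendsto ξ).comp hBu
  simp only [hℓ A hA] at image_apply
  exact (tendsto_nhds_unique image_apply (((ℓ A).continuous.tendsto x).comp hu)).trans
    (hℓ A hA x).symm

end Completeness

section Integral

variable {I : Type*} [MeasurableSpace I]

theorem sInt_eq_integral {ξ : SignedMeasure I} {f : I → ℝ} (hf : ξ.Integrable f) :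
    sInt ξ f = ∫ᵛ x, f x ∂<•ξ := by
  have integrable : Integrable f ξ.totalVariation := ξ.totalVariation_eq_variation ▸ hf
  conv_rhs => rw [← ξ.toSignedMeasure_toJordanDecomposition, JordanDecomposition.toSignedMeasure]
  rw [VectorMeasure.integral_sub_vectorMeasure, VectorMeasure.integral_toSignedMeasure,
    VectorMeasure.integral_toSignedMeasure, sInt]
  · simpa [VectorMeasure.Integrable] using integrable.left_of_add_measure
  · simpa [VectorMeasure.Integrable] using integrable.right_of_add_measure

theorem sInt_toSignedMeasure (μ : Measure I) [IsFiniteMeasure μ] (f : I → ℝ) :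
    sInt μ.toSignedMeasure f = ∫ x, f x ∂μ := by
  have jordan : μ.toSignedMeasure.toJordanDecomposition =
      ⟨μ, 0, Measure.MutuallySingular.zero_right⟩ :=
    SignedMeasure.toJordanDecomposition_eq (by simp [JordanDecomposition.toSignedMeasure])
  simp [sInt, jordan]

theorem exists_continuousLinearMap_eq_sInt {f : I → ℝ} (hf : Measurable f) {C : ℝ}
    (hC : ∀ x, |f x| ≤ C) : ∃ ℓ : SignedMeasure I →L[ℝ] ℝ, ∀ ξ, sInt ξ f = ℓ ξ := by
  have integrable (ξ : SignedMeasure I) : ξ.Integrable f :=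
    .of_bound hf.aestronglyMeasurable C (.of_forall hC)
  refine ⟨LinearMap.mkContinuous
    { toFun ξ := ∫ᵛ x, f x ∂<•ξ
      map_add' ξ η := VectorMeasure.integral_add_vectorMeasure (integrable ξ) (integrable η)
      map_smul' c ξ := VectorMeasure.integral_smul_vectorMeasure f c } C fun ξ => ?_,
    fun ξ => sInt_eq_integral (integrable ξ)⟩
  have bound := VectorMeasure.norm_integral_le_of_norm_le_const (μ := ξ)
    (B := (ContinuousLinearMap.lsmul ℝ ℝ).flip) (f := f) (.of_forall hC)
  rwa [ContinuousLinearMap.opNorm_flip, ContinuousLinearMap.opNorm_lsmul, mul_one,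
    ← tvNorm_eq_variation_real] at bound

end Integral

section RateOperator

open ProbabilityTheory

variable {I : Type*} [MeasurableSpace I]

/-- `B` is the rate operator of the kernel `κ` filtered by the set `S`,
`B ξ (dz) = 1_S(z) ∫ κ(x, dz) ξ(dx) - κ(z, I) ξ(dz)`: mass jumps at rate `κ`, and the mass that
lands outside `S` is killed. -/
def IsFilteredRateOperator (κ : Kernel I I) (S : Set I) (B : SignedMeasure I → SignedMeasure I) :
    Prop :=
  ∀ (ξ : SignedMeasure I) (A : Set I), MeasurableSet A →
    B ξ A = sInt ξ (fun x => (κ x (A ∩ S)).toReal)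
      - sInt ξ (Set.indicator A fun z => (κ z Set.univ).toReal)

/-- The closed cone of positive measures that vanish outside `S`. -/
noncomputable def positiveMeasureCone (S : Set I) : ProperCone ℝ (SignedMeasure I) where
  carrier := {ξ | (∀ A, MeasurableSet A → 0 ≤ ξ A) ∧ ξ Sᶜ = 0}
  zero_mem' := ⟨fun _ _ => le_rfl, rfl⟩
  add_mem' hξ hη := ⟨fun A hA => add_nonneg (hξ.1 A hA) (hη.1 A hA), by simp [hξ.2, hη.2]⟩
  smul_mem' c _ hξ := ⟨fun A hA => mul_nonneg c.2 (hξ.1 A hA), mul_eq_zero_of_right _ hξ.2⟩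
  isClosed' := by
    simp only [Set.ofPred_and, Set.ofPred_forall]
    refine .inter (isClosed_iInter fun A => isClosed_iInter fun _ => ?_) ?_
    · exact isClosed_le continuous_const (evalCLM A).continuous
    · exact isClosed_eq (evalCLM Sᶜ).continuous continuous_const

theorem mem_positiveMeasureCone {S : Set I} {ξ : SignedMeasure I} :
    ξ ∈ positiveMeasureCone S ↔ (∀ A, MeasurableSet A → 0 ≤ ξ A) ∧ ξ Sᶜ = 0 :=
  .rfl

theorem mem_deltaY_iff {O : Type*} {h : I → O} {y : O} {ξ : SignedMeasure I} :
    ξ ∈ DeltaY h y ↔ ξ ∈ positiveMeasureCone (h ⁻¹' {y}) ∧ ξ Set.univ = 1 := by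
  rw [mem_positiveMeasureCone, DeltaY, Set.mem_ofPred_eq, and_assoc,
    and_comm (a := ξ Set.univ = 1)]

theorem exists_toSignedMeasure_eq_of_nonneg {ξ : SignedMeasure I}
    (hξ : ∀ A, MeasurableSet A → 0 ≤ ξ A) :
    ∃ (μ : Measure I) (_ : IsFiniteMeasure μ), μ.toSignedMeasure = ξ := by
  have nonneg : 0 ≤[Set.univ] ξ := (VectorMeasure.le_restrict_univ_iff_le 0 ξ).2 hξ
  exact ⟨ξ.toMeasureOfZeroLE Set.univ .univ nonneg, inferInstance,
    SignedMeasure.toMeasureOfZeroLE_toSignedMeasure ξ nonneg⟩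

variable {κ : Kernel I I} {S : Set I} {B : SignedMeasure I → SignedMeasure I}

theorem IsFilteredRateOperator.apply_toSignedMeasure (hB : IsFilteredRateOperator κ S B)
    (μ : Measure I) [IsFiniteMeasure μ] {A : Set I} (hA : MeasurableSet A) :
    B μ.toSignedMeasure A =
      ∫ x, (κ x (A ∩ S)).toReal ∂μ - ∫ x in A, (κ x Set.univ).toReal ∂μ := by
  rw [hB _ A hA, sInt_toSignedMeasure, sInt_toSignedMeasure, integral_indicator hA]

theorem abs_kernel_toReal_le_bound (κ : Kernel I I) [IsFiniteKernel κ] (x : I) (A : Set I) :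
    |(κ x A).toReal| ≤ κ.bound.toReal := by
  rw [abs_of_nonneg ENNReal.toReal_nonneg]
  exact ENNReal.toReal_mono κ.bound_ne_top (κ.measure_le_bound x A)

variable [IsFiniteKernel κ]

theorem IsFilteredRateOperator.exists_continuousLinearMap_eq (hB : IsFilteredRateOperator κ S B)
    (hS : MeasurableSet S) : ∃ L : SignedMeasure I →L[ℝ] SignedMeasure I, ⇑L = B := by
  refine exists_continuousLinearMap_of_forall_apply fun A hA => ?_
  obtain ⟨gain, hgain⟩ := exists_continuousLinearMap_eq_sInt
    (κ.measurable_coe (hA.inter hS)).ennreal_toReal fun x => abs_kernel_toReal_le_bound κ x _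
  obtain ⟨loss, hloss⟩ := exists_continuousLinearMap_eq_sInt
    ((κ.measurable_coe .univ).ennreal_toReal.indicator hA) fun x =>
      (norm_indicator_le_norm_self (fun x => (κ x Set.univ).toReal) x).trans
        (abs_kernel_toReal_le_bound κ x Set.univ)
  exact ⟨gain - loss, fun ξ => by simp [hB ξ A hA, hgain, hloss]⟩

theorem IsFilteredRateOperator.add_smul_mem_positiveMeasureCone
    (hB : IsFilteredRateOperator κ S B) (hS : MeasurableSet S) {ξ : SignedMeasure I}
    (hξ : ξ ∈ positiveMeasureCone S) :
    B ξ + κ.bound.toReal • ξ ∈ positiveMeasureCone S := by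
  obtain ⟨μ, _, rfl⟩ := exists_toSignedMeasure_eq_of_nonneg hξ.1
  refine ⟨fun A hA => ?_, ?_⟩
  · have gain_nonneg : 0 ≤ ∫ x, (κ x (A ∩ S)).toReal ∂μ :=
      integral_nonneg fun x => ENNReal.toReal_nonneg
    have loss_le : ‖∫ x in A, (κ x Set.univ).toReal ∂μ‖ ≤ κ.bound.toReal * μ.real A :=
      norm_setIntegral_le_of_norm_le_const (measure_lt_top μ A)
        fun x _ => abs_kernel_toReal_le_bound κ x Set.univ
    rw [_root_.add_apply, _root_.smul_apply, hB.apply_toSignedMeasure μ hA,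
      Measure.toSignedMeasure_apply_measurable hA, smul_eq_mul]
    linarith [(le_abs_self _).trans loss_le]
  · have null : μ Sᶜ = 0 := by
      rw [← measureReal_eq_zero_iff, ← Measure.toSignedMeasure_apply_measurable hS.compl]
      exact hξ.2
    simp [hB.apply_toSignedMeasure μ hS.compl, hS.compl, Measure.restrict_eq_zero.2 null,
      null, Measure.real]

theorem ode_unique_global_solution_general {I O : Type*} [MeasurableSpace I] (h : I → O) (y : O)
    (hy : MeasurableSet (h ⁻¹' {y})) (κ : Kernel I I) [IsFiniteKernel κ]
    (B : SignedMeasure I → SignedMeasure I)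
    (hB : IsFilteredRateOperator κ (h ⁻¹' {y}) B) (ρ : SignedMeasure I) (hρ : ρ ∈ DeltaY h y) :
    ∃ z : ℝ → SignedMeasure I,
      (z 0 = ρ ∧ (∀ t : ℝ, 0 ≤ t → z t ∈ DeltaY h y) ∧
        (∀ t : ℝ, 0 ≤ t → HasTVDerivAt B z t)) ∧
      ∀ w : ℝ → SignedMeasure I, w 0 = ρ → (∀ t : ℝ, 0 ≤ t → HasTVDerivAt B w t) →
        ∀ t : ℝ, 0 ≤ t → w t = z t := by
  obtain ⟨L, rfl⟩ := hB.exists_continuousLinearMap_eq hy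
  obtain ⟨z, hz0, hz⟩ := exists_solution_normalizedField_mem_cone (φ := evalCLM Set.univ)
    (fun ξ hξ => (mem_positiveMeasureCone.1 hξ).1 Set.univ .univ)
    (fun ξ hξ => hB.add_smul_mem_positiveMeasureCone hy hξ)
    (mem_deltaY_iff.1 hρ).1 (mem_deltaY_iff.1 hρ).2
  have z_deriv (t : ℝ) (ht : 0 ≤ t) : HasDerivWithinAt z (Fy L (z t)) (Set.Ici 0) t :=
    (hz t ht).2.2.hasDerivWithinAt
  simp only [hasTVDerivAt_iff_hasDerivWithinAt]
  refine ⟨z, ⟨hz0, fun t ht => mem_deltaY_iff.2 ⟨(hz t ht).1, (hz t ht).2.1⟩, z_deriv⟩,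
    fun w hw0 hw => ?_⟩
  exact eqOn_Ici_of_hasDerivWithinAt_of_locallyLipschitz
    (contDiff_normalizedField (evalCLM Set.univ) L).locallyLipschitz hw z_deriv (hw0.trans hz0.symm)

end RateOperator

/-- With bounded rate kernel, for each `y ∈ O` and initial condition `ρ ∈ Δ_y`, the ODE
`dz/dt = F_y(z(t))`, `z(0) = ρ` admits a unique global solution in `C¹([0,∞); Δ_y)`:
in particular `z(t)` remains a probability measure concentrated on `h⁻¹(y)` for all
`t ≥ 0`. -/
theorem ode_unique_global_solution {I O : Type*}
    [MetricSpace I] [MeasurableSpace I] [BorelSpace I]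
    [SecondCountableTopology I] [CompleteSpace I]
    [MetricSpace O] [MeasurableSpace O] [BorelSpace O]
    [SecondCountableTopology O] [CompleteSpace O]
    (h : I → O) (hh : Measurable h)
    (κ : ProbabilityTheory.Kernel I I) (hdiag : ∀ x, κ x {x} = 0)
    (C : ℝ) (hC : ∀ x, κ x Set.univ ≤ ENNReal.ofReal C)
    (y : O) (B : SignedMeasure I → SignedMeasure I)
    (hB : ∀ (ξ : SignedMeasure I) (A : Set I), MeasurableSet A →
      B ξ A = sInt ξ (fun x => (κ x (A ∩ h ⁻¹' {y})).toReal)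
              - sInt ξ (Set.indicator A fun z => (κ z Set.univ).toReal))
    (ρ : SignedMeasure I) (hρ : ρ ∈ DeltaY h y) :
    ∃ z : ℝ → SignedMeasure I,
      (z 0 = ρ ∧ (∀ t : ℝ, 0 ≤ t → z t ∈ DeltaY h y) ∧
        (∀ t : ℝ, 0 ≤ t → HasTVDerivAt B z t)) ∧
      ∀ w : ℝ → SignedMeasure I,
        (w 0 = ρ ∧ (∀ t : ℝ, 0 ≤ t → w t ∈ DeltaY h y) ∧
          (∀ t : ℝ, 0 ≤ t → HasTVDerivAt B w t)) →
        ∀ t : ℝ, 0 ≤ t → w t = z t := by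
  have : ProbabilityTheory.IsFiniteKernel κ := ⟨⟨ENNReal.ofReal C, ENNReal.ofReal_lt_top, hC⟩⟩
  obtain ⟨z, hz, unique⟩ :=
    ode_unique_global_solution_general h y (hh (measurableSet_singleton y)) κ B hB ρ hρ
  exact ⟨z, hz, fun w hw => unique w hw.1 hw.2.2⟩
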